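/- arXiv:1806.02560 — 2 statements merged into one kernel-verified Lean document; each statement's English description precedes it below -/
import Mathlib

section
/- Let b ≥ 2 be an integer with prime factorization b = p₁^{a₁} p₂^{a₂} ⋯ p_r^{a_r} with r ≥ 2 distinct primes. Suppose there exist two distinct indices i ≠ j such that a_i(p_i−1) = a_j(p_j−1) = max_{1 ≤ m ≤ r} a_m(p_m−1). Then for every integer k ≥ 2, the sequence (ℓ_b(n!))_{n∈ℕ} of last nonzero digits of n! in base b is not k-automatic. -/
/-- The state reached after feeding the base-`k` digits of `n`
(most significant digit first, empty string for `n = 0`) into the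
transition function `ρ` starting from state `q₀`. -/
def autoRun {Q : Type} (k : ℕ) (ρ : Q → Fin k → Q) (q₀ : Q) (n : ℕ) : Q :=
  (Nat.digits k n).reverse.foldl (fun q d => if h : d < k then ρ q ⟨d, h⟩ else q) q₀

/-- A sequence `a : ℕ → Δ` is `k`-automatic: some DFAO over the alphabet
`{0, …, k-1}` computes `a n` from the base-`k` digits of `n`
(most significant digit first). -/
def IsAutomatic {Δ : Type*} (k : ℕ) (a : ℕ → Δ) : Prop :=
  ∃ (Q : Type) (_ : Finite Q) (ρ : Q → Fin k → Q) (q₀ : Q) (τ : Q → Δ),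
    ∀ n : ℕ, a n = τ (autoRun k ρ q₀ n)

/-- `lnz b n` is the last nonzero digit of `n` in base `b`:
`(n / b ^ v_b(n)) % b`, where `v_b(n) = padicValNat b n` is the largest `t`
with `b ^ t ∣ n`. -/
def lnz (b n : ℕ) : ℕ := (n / b ^ padicValNat b n) % b

/-- `digSum b n` is the sum of the digits of `n` written in base `b`. -/
def digSum (b n : ℕ) : ℕ := (Nat.digits b n).sum

/-!
For a prime `p ∣ b` put `c p = v_p(b) * (p - 1)`. By Legendre's formula `v_p(n!)` is
`(n - s_p(n)) / (p - 1)`, where `s_p` is the base-`p` digit sum, so `v_b(n!)` is governed by the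
primes with maximal `c p`, and among these by those with large digit sum `s_p(n)`. When the maximum
is attained twice, every prime `p ∣ b` has a competitor `q ≠ p` with `c p ≤ c q`. Just above a small
multiple of a suitable power of `p` the sum `s_p` is small while `s_q` is large, and there the full
power `p ^ v_p(b)` divides the last nonzero digit.

If the sequence were automatic, pigeonholing on states would turn these windows into a cylinder (all
numbers whose base-`k` expansion has a given prefix) on which `p ^ v_p(b)` divides the last nonzero
digit, and such a cylinder could be found inside any prescribed one. Nesting cylinders over all
`p ∣ b` would give an `n` for which `b` divides the last nonzero digit of `n!`, a number strictly
between `0` and `b`.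
-/

open scoped Nat

section Digits

variable {b : ℕ}

lemma digits_mul_pow_add {x y L : ℕ} (hb : 1 < b) (hx : 0 < x) (hy : y < b ^ L) :
    b.digits (x * b ^ L + y) =
      b.digits y ++ List.replicate (L - (b.digits y).length) 0 ++ b.digits x := by
  have hlen : (b.digits y).length ≤ L := (Nat.digits_length_le_iff hb y).mpr hy
  rw [Nat.digits_append_zeroes_append_digits hb hx, Nat.add_sub_cancel' hlen]
  ring_nf

lemma digSum_mul_pow_add {x y L : ℕ} (hb : 1 < b) (hy : y < b ^ L) :
    digSum b (x * b ^ L + y) = digSum b x + digSum b y := by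
  rcases x.eq_zero_or_pos with rfl | hx
  · simp [digSum]
  · rw [digSum, digits_mul_pow_add hb hx hy]
    simp [digSum, add_comm]

lemma digSum_pos {x : ℕ} (hx : x ≠ 0) : 0 < digSum b x := by
  have hne : b.digits x ≠ [] := Nat.digits_ne_nil_iff_ne_zero.mpr hx
  exact (Nat.pos_of_ne_zero (Nat.getLast_digit_ne_zero b hx)).trans_le
    (List.le_sum_of_mem (List.getLast_mem hne))

lemma digSum_mod_pow_lt {L n : ℕ} (hb : 1 < b) (hn : b ^ L ≤ n) :
    digSum b (n % b ^ L) < digSum b n := by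
  have hpow : 0 < b ^ L := by positivity
  have hsplit := digSum_mul_pow_add (x := n / b ^ L) hb (Nat.mod_lt n hpow)
  rw [Nat.div_add_mod'] at hsplit
  have := digSum_pos (b := b) (Nat.div_pos hn hpow).ne'
  omega

lemma exists_ge_pow_modEq {p m : ℕ} (hm : 0 < m) (hpm : p.Coprime m) (L B : ℕ) :
    ∃ L' ≥ L + B, p ^ L' ≡ p ^ L [MOD m] := by
  refine ⟨L + φ m * B, ?_, ?_⟩
  · have := Nat.le_mul_of_pos_left B (Nat.totient_pos.mpr hm)
    omega
  · simpa [pow_add, pow_mul] using ((Nat.ModEq.pow_totient hpm).pow B).mul_left (p ^ L)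

-- Replacing `L` by a large `L'` with `p ^ L' ≡ p ^ L` modulo a large power of `q` keeps the low
-- base-`q` digits of all the numbers `d * p ^ L + z` and adds at least one further nonzero digit.
lemma exists_le_digSum_mul_pow_add {p q : ℕ} (hp : 1 < p) (hq : 1 < q) (hpq : p.Coprime q)
    (D Z N C : ℕ) :
    ∃ L ≥ N, ∀ d z, 0 < d → d ≤ D → z ≤ Z → C ≤ digSum q (d * p ^ L + z) := by
  induction C with
  | zero => exact ⟨N, le_rfl, fun _ _ _ _ _ => Nat.zero_le _⟩
  | succ C ih =>
    obtain ⟨L, hNL, hL⟩ := ih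
    set h := D * p ^ L + Z
    obtain ⟨L', hL', hmod⟩ := exists_ge_pow_modEq (by positivity) (hpq.pow_right h) L (q ^ h)
    refine ⟨L', by omega, fun d z hd hdD hz => ?_⟩
    have hlow : (d * p ^ L' + z) % q ^ h = d * p ^ L + z := by
      have hlt : d * p ^ L + z < q ^ h := calc
        d * p ^ L + z ≤ D * p ^ L + Z := by gcongr
        _ < q ^ h := Nat.lt_pow_self hq
      rw [(hmod.mul_left d).add_right z, Nat.mod_eq_of_lt hlt]
    have hbig : q ^ h ≤ d * p ^ L' + z := calc
      q ^ h ≤ L' := by omega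
      _ ≤ p ^ L' := (Nat.lt_pow_self hp).le
      _ ≤ d * p ^ L' := Nat.le_mul_of_pos_left _ hd
      _ ≤ d * p ^ L' + z := Nat.le_add_right _ _
    calc C + 1 ≤ digSum q (d * p ^ L + z) + 1 := by gcongr; exact hL d z hd hdD hz
      _ ≤ digSum q (d * p ^ L' + z) := hlow ▸ digSum_mod_pow_lt hq hbig

end Digits

section LastNonzeroDigit

variable {b n : ℕ}

lemma lnz_eq_divMaxPow_mod (b n : ℕ) : lnz b n = n.divMaxPow b % b := by
  rcases b.eq_zero_or_pos with rfl | hb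
  · simp [lnz]
  · rw [lnz, Nat.div_eq_of_eq_mul_left (by positivity) (Nat.divMaxPow_mul_pow_padicValNat b n).symm]

lemma not_dvd_lnz (hb : 1 < b) (hn : n ≠ 0) : ¬ b ∣ lnz b n := by
  rw [lnz_eq_divMaxPow_mod, Nat.dvd_mod_iff dvd_rfl]
  exact Nat.not_dvd_divMaxPow hb hn

lemma padicValNat_mul_padicValNat_le (q b : ℕ) [Fact q.Prime] (hn : n ≠ 0) :
    padicValNat q b * padicValNat b n ≤ padicValNat q n := by
  rw [← padicValNat_dvd_iff_le hn, pow_mul]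
  exact (pow_dvd_pow_of_dvd pow_padicValNat_dvd _).trans pow_padicValNat_dvd

lemma pow_dvd_lnz {p : ℕ} [Fact p.Prime] (hn : n ≠ 0)
    (h : padicValNat p b * (padicValNat b n + 1) ≤ padicValNat p n) :
    p ^ padicValNat p b ∣ lnz b n := by
  have hfac := Nat.pow_padicValNat_mul_divMaxPow b n
  have hpow : b ^ padicValNat b n ≠ 0 := left_ne_zero_of_mul (hfac ▸ hn)
  have hcof : n.divMaxPow b ≠ 0 := right_ne_zero_of_mul (hfac ▸ hn)
  have hval : padicValNat b n * padicValNat p b + padicValNat p (n.divMaxPow b) =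
      padicValNat p n := by
    conv_rhs => rw [← hfac, padicValNat.mul hpow hcof, padicValNat.pow]
  rw [lnz_eq_divMaxPow_mod, Nat.dvd_mod_iff pow_padicValNat_dvd, padicValNat_dvd_iff_le hcof]
  linarith

lemma pow_dvd_lnz_factorial {p q : ℕ} [hp : Fact p.Prime] [Fact q.Prime]
    (hc : padicValNat p b * (p - 1) ≤ padicValNat q b * (q - 1))
    (hs : digSum p n + padicValNat p b * (p - 1) ≤ digSum q n) :
    p ^ padicValNat p b ∣ lnz b n ! := by
  refine pow_dvd_lnz n.factorial_ne_zero ?_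
  set V := padicValNat b n !
  have legendre_p : (p - 1) * padicValNat p n ! = n - digSum p n :=
    sub_one_mul_padicValNat_factorial n
  have legendre_q : (q - 1) * padicValNat q n ! = n - digSum q n :=
    sub_one_mul_padicValNat_factorial n
  have hsq : digSum q n ≤ n := Nat.digit_sum_le q n
  have hVq : padicValNat q b * (q - 1) * V ≤ n - digSum q n := calc
    padicValNat q b * (q - 1) * V = (q - 1) * (padicValNat q b * V) := by ring
    _ ≤ (q - 1) * padicValNat q n ! := by
      gcongr; exact padicValNat_mul_padicValNat_le q b n.factorial_ne_zero
    _ = n - digSum q n := legendre_q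
  have hVp : (p - 1) * (padicValNat p b * (V + 1)) ≤ (p - 1) * padicValNat p n ! := calc
    (p - 1) * (padicValNat p b * (V + 1)) =
        padicValNat p b * (p - 1) * V + padicValNat p b * (p - 1) := by ring
    _ ≤ padicValNat q b * (q - 1) * V + padicValNat p b * (p - 1) := by gcongr
    _ ≤ n - digSum p n := by omega
    _ = (p - 1) * padicValNat p n ! := legendre_p.symm
  exact Nat.le_of_mul_le_mul_left hVp (Nat.sub_pos_of_lt hp.out.one_lt)

end LastNonzeroDigit

section Windows

/-- For all `D` and `Z` there is an `N > 0` such that `A` contains the windows `[d * N, d * N + Z]`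
at the first `D` multiples of `N`. The indices `n` for which a prime power divides the last nonzero
digit of `n!` form such a set, with `N` a power of the prime. -/
def HasProgressionWindows (A : Set ℕ) : Prop :=
  ∀ D Z, ∃ N > 0, ∀ d z, 0 < d → d ≤ D → z ≤ Z → d * N + z ∈ A

lemma hasProgressionWindows_pow_dvd_lnz_factorial {b p q : ℕ} (hp : p.Prime) (hq : q.Prime)
    (hpq : p ≠ q) (hc : padicValNat p b * (p - 1) ≤ padicValNat q b * (q - 1)) :
    HasProgressionWindows {n | p ^ padicValNat p b ∣ lnz b n !} := by
  intro D Z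
  have := Fact.mk hp
  have := Fact.mk hq
  obtain ⟨L, hZL, hL⟩ := exists_le_digSum_mul_pow_add hp.one_lt hq.one_lt
    ((Nat.coprime_primes hp hq).mpr hpq) D Z Z (D + Z + padicValNat p b * (p - 1))
  refine ⟨p ^ L, pow_pos hp.pos L, fun d z hd hdD hz => pow_dvd_lnz_factorial hc ?_⟩
  have hzL : z < p ^ L := (hz.trans hZL).trans_lt (Nat.lt_pow_self hp.one_lt)
  calc digSum p (d * p ^ L + z) + padicValNat p b * (p - 1)
      = digSum p d + digSum p z + padicValNat p b * (p - 1) := by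
        rw [digSum_mul_pow_add hp.one_lt hzL]
    _ ≤ D + Z + padicValNat p b * (p - 1) := by
        gcongr
        · exact (Nat.digit_sum_le p d).trans hdD
        · exact (Nat.digit_sum_le p z).trans hz
    _ ≤ digSum q (d * p ^ L + z) := hL d z hd hdD hz

end Windows

section Cylinders

/-- The numbers whose base-`k` expansion has that of `w` as a prefix, i.e. the interval
`[w * k ^ m, (w + 1) * k ^ m)` for some `m`. Since `0` has the empty expansion, `cylinder k 0` is
everything once `2 ≤ k`. -/
def cylinder (k w : ℕ) : Set ℕ := {n | ∃ m, n / k ^ m = w}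

/-- Every cylinder contains a cylinder lying inside `A`: in the topology generated by the cylinders
`A` contains a dense open set. -/
def HasDenseCylinders (k : ℕ) (A : Set ℕ) : Prop :=
  ∀ w, ∃ w' ∈ cylinder k w, cylinder k w' ⊆ A

variable {k : ℕ}

lemma self_mem_cylinder (k w : ℕ) : w ∈ cylinder k w := ⟨0, by simp⟩

lemma cylinder_subset_of_mem {w w' : ℕ} (h : w' ∈ cylinder k w) : cylinder k w' ⊆ cylinder k w := by
  obtain ⟨m, rfl⟩ := h
  rintro n ⟨m', rfl⟩
  exact ⟨m' + m, by rw [pow_add, Nat.div_div_eq_div_mul]⟩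

lemma exists_mul_mem_cylinder (hk : 1 < k) {N : ℕ} (hN : 0 < N) (w : ℕ) :
    ∃ d > 0, d ≤ (w + 1) * k ∧ d * N ∈ cylinder k w := by
  set m := Nat.log k N + 1
  have hlt : N < k ^ m := Nat.lt_pow_succ_log_self hk N
  have hle : k ^ m ≤ k * N := by
    rw [pow_succ']
    gcongr
    exact Nat.pow_log_le_self k hN.ne'
  have hgt : w * k ^ m < (w * k ^ m / N + 1) * N := Nat.lt_mul_of_div_lt (Nat.lt_succ_self _) hN
  have hup : (w * k ^ m / N + 1) * N ≤ w * k ^ m + N := by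
    rw [add_one_mul]
    exact Nat.add_le_add_right (Nat.div_mul_le_self _ N) N
  refine ⟨w * k ^ m / N + 1, Nat.succ_pos _, ?_, m, ?_⟩
  · refine Nat.le_of_mul_le_mul_right (hup.trans ?_) hN
    calc w * k ^ m + N
        ≤ w * (k * N) + k * N :=
          Nat.add_le_add (Nat.mul_le_mul_left w hle) (Nat.le_mul_of_pos_left N (by omega))
      _ = (w + 1) * k * N := by ring
  · exact Nat.div_eq_of_lt_le hgt.le (by rw [add_one_mul w]; omega)

namespace HasDenseCylinders

variable {A B : Set ℕ}

lemma nonempty (hA : HasDenseCylinders k A) : A.Nonempty := by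
  obtain ⟨w, -, hw⟩ := hA 0
  exact ⟨w, hw (self_mem_cylinder k w)⟩

lemma inter (hA : HasDenseCylinders k A) (hB : HasDenseCylinders k B) :
    HasDenseCylinders k (A ∩ B) := by
  intro w
  obtain ⟨u, huw, huA⟩ := hA w
  obtain ⟨v, hvu, hvB⟩ := hB u
  exact ⟨v, cylinder_subset_of_mem huw hvu,
    Set.subset_inter ((cylinder_subset_of_mem hvu).trans huA) hvB⟩

lemma iInter {ι : Type*} [Finite ι] {A : ι → Set ℕ} (hA : ∀ i, HasDenseCylinders k (A i)) :
    HasDenseCylinders k (⋂ i, A i) := by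
  suffices ∀ s : Set ι, s.Finite → HasDenseCylinders k (⋂ i ∈ s, A i) by
    simpa using this Set.univ Set.finite_univ
  intro s hs
  induction s, hs using Set.Finite.induction_on with
  | empty => exact fun w => ⟨w, self_mem_cylinder k w, by simp⟩
  | insert _ _ ih =>
    rw [Set.biInter_insert]
    exact (hA _).inter ih

end HasDenseCylinders

end Cylinders

section Automatic

variable {k : ℕ}

lemma autoRun_mul_pow_add_congr {Q : Type} {ρ : Q → Fin k → Q} {q₀ : Q} {w w' m z : ℕ}
    (hk : 1 < k) (hw : 0 < w) (hw' : 0 < w') (hz : z < k ^ m)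
    (h : autoRun k ρ q₀ w = autoRun k ρ q₀ w') :
    autoRun k ρ q₀ (w * k ^ m + z) = autoRun k ρ q₀ (w' * k ^ m + z) := by
  unfold autoRun at h ⊢
  rw [digits_mul_pow_add hk hw hz, digits_mul_pow_add hk hw' hz]
  simp only [List.reverse_append, List.foldl_append, h]

lemma IsAutomatic.comp {Δ Γ : Type*} {u : ℕ → Δ} (hu : IsAutomatic k u) (f : Δ → Γ) :
    IsAutomatic k (fun n => f (u n)) := by
  obtain ⟨Q, hQ, ρ, q₀, τ, hτ⟩ := hu
  exact ⟨Q, hQ, ρ, q₀, f ∘ τ, fun n => congrArg f (hτ n)⟩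

-- Whether and how early the cylinder of `w` leaves `A` depends only on the state reached at `w`.
lemma IsAutomatic.exists_escape_bound {A : Set ℕ} (hk : 1 < k) (hA : IsAutomatic k (· ∈ A)) :
    ∃ M, ∀ w > 0, ¬ cylinder k w ⊆ A → ∃ m ≤ M, ∃ z < k ^ m, w * k ^ m + z ∉ A := by
  obtain ⟨Q, _, ρ, q₀, τ, hτ⟩ := hA
  change ∀ n, (n ∈ A) = _ at hτ
  have escape_depth : ∀ s : Q, ∃ m, ∀ w > 0, autoRun k ρ q₀ w = s → ¬ cylinder k w ⊆ A →
      ∃ z < k ^ m, w * k ^ m + z ∉ A := by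
    intro s
    by_cases hs : ∃ w > 0, autoRun k ρ q₀ w = s ∧ ¬ cylinder k w ⊆ A
    · obtain ⟨w₀, hw₀, rfl, hesc⟩ := hs
      obtain ⟨n, ⟨m, rfl⟩, hnA⟩ := Set.not_subset.mp hesc
      have hz : n % k ^ m < k ^ m := Nat.mod_lt n (by positivity)
      refine ⟨m, fun w hw hstate _ => ⟨n % k ^ m, hz, ?_⟩⟩
      rwa [hτ, autoRun_mul_pow_add_congr hk hw hw₀ hz hstate, ← hτ, Nat.div_add_mod']
    · exact ⟨0, fun w hw hstate hesc => absurd ⟨w, hw, hstate, hesc⟩ hs⟩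
  choose depth hdepth using escape_depth
  obtain ⟨M, hM⟩ := (Set.finite_range depth).bddAbove
  exact ⟨M, fun w hw hesc => ⟨_, hM ⟨_, rfl⟩, hdepth _ w hw rfl hesc⟩⟩

lemma HasProgressionWindows.hasDenseCylinders {A : Set ℕ} (hk : 1 < k)
    (hwin : HasProgressionWindows A) (hA : IsAutomatic k (· ∈ A)) : HasDenseCylinders k A := by
  intro w
  obtain ⟨M, hM⟩ := hA.exists_escape_bound hk
  obtain ⟨N, hN, hNA⟩ := hwin ((w + 1) * k * k ^ M) (k ^ M)
  obtain ⟨d, hd, hdw, hmem⟩ := exists_mul_mem_cylinder hk hN w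
  refine ⟨d * N, hmem, ?_⟩
  by_contra hesc
  obtain ⟨m, hmM, z, hz, hnot⟩ := hM (d * N) (by positivity) hesc
  have hpow : k ^ m ≤ k ^ M := Nat.pow_le_pow_right (by omega) hmM
  apply hnot
  rw [mul_right_comm]
  exact hNA _ z (by positivity) (Nat.mul_le_mul hdw hpow) (hz.le.trans hpow)

end Automatic

lemma padicValNat_prod_pow {ι : Type*} [Fintype ι] {p : ι → ℕ} (hp : ∀ i, (p i).Prime)
    (hpinj : Function.Injective p) (a : ι → ℕ) (i : ι) :
    padicValNat (p i) (∏ j, p j ^ a j) = a i := by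
  classical
  rw [← Nat.factorization_def _ (hp i),
    Nat.factorization_prod fun j _ => pow_ne_zero _ (hp j).ne_zero]
  simp [Finsupp.finsetSum_apply, (hp _).factorization, Finsupp.single_apply, hpinj.eq_iff]

/-- Let `b` have prime factorization `∏ i, p i ^ a i` with `r ≥ 2` distinct
primes.  If two distinct indices `i ≠ j` attain the maximum of
`a m * (p m - 1)`, then the sequence of last nonzero digits of `n !` in base
`b` is not `k`-automatic for any `k ≥ 2`. -/
theorem lnz_factorial_not_automatic_of_tied_max (b r : ℕ) (hb : 2 ≤ b) (hr : 2 ≤ r)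
    (p a : Fin r → ℕ) (hp : ∀ i, (p i).Prime) (hpinj : Function.Injective p)
    (ha : ∀ i, 0 < a i) (hfac : b = ∏ i, p i ^ a i)
    (htie : ∃ i j : Fin r, i ≠ j ∧ a i * (p i - 1) = a j * (p j - 1) ∧
      ∀ m : Fin r, a m * (p m - 1) ≤ a i * (p i - 1)) :
    ∀ k : ℕ, 2 ≤ k → ¬ IsAutomatic k (fun n => lnz b (Nat.factorial n)) := by
  intro k hk haut
  obtain ⟨i₀, j₀, hij, heq, hmax⟩ := htie
  have competitor (i) : ∃ j ≠ i, a i * (p i - 1) ≤ a j * (p j - 1) := by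
    by_cases hi : i = i₀
    · exact ⟨j₀, hi ▸ hij.symm, heq ▸ hmax i⟩
    · exact ⟨i₀, Ne.symm hi, hmax i⟩
  have hval (i) : padicValNat (p i) b = a i := hfac ▸ padicValNat_prod_pow hp hpinj a i
  have dense (i) : HasDenseCylinders k {n | p i ^ a i ∣ lnz b n !} := by
    obtain ⟨j, hji, hle⟩ := competitor i
    have windows := hasProgressionWindows_pow_dvd_lnz_factorial (b := b) (hp i) (hp j)
      (hpinj.ne hji.symm) (by rwa [hval, hval])
    rw [hval] at windows
    exact windows.hasDenseCylinders hk (haut.comp (p i ^ a i ∣ ·))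
  obtain ⟨n, hn⟩ := (HasDenseCylinders.iInter dense).nonempty
  refine not_dvd_lnz hb n.factorial_ne_zero ?_
  conv_lhs => rw [hfac]
  refine Fintype.prod_dvd_of_isRelPrime (fun i j hne => ?_) (Set.mem_iInter.mp hn)
  exact Nat.coprime_iff_isRelPrime.mp
    (Nat.coprime_pow_primes _ _ (hp i) (hp j) (hpinj.ne hne))
end

section
/- Let P be a finite set of prime numbers with at least two elements, let p be the largest element of P, and let c > 0 be a real number. Define A₋ = {n ∈ ℤ₊ : max_{q∈P} s_q(n) = s_p(n)} and A₊ = {n ∈ ℤ₊ : max_{q∈P} s_q(n) − s_p(n) ≥ c}. Then for every integer k ≥ 2 there is no finite set Q of states, transition function ρ : Q × {0,…,k−1} → Q, initial state q₀ ∈ Q, finite output alphabet Δ, output function τ : Q → Δ, and two distinct values δ₋, δ₊ ∈ Δ, such that running the automaton on the base-k digits of n (most significant digit first) outputs δ₋ for every n ∈ A₋ and δ₊ for every n ∈ A₊. -/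
/-!
Let `s_b` be the digit sum in base `b` and let `q ≠ p` be in `P`.

* Since `(b - 1) / log b` increases with `b`, every base `q < p` has `s_q n ≤ (p - 1) N` for all
  `n ≤ C p ^ N` once `N` is large. For fixed `a, d > 0` the number `a p ^ M - d` has at least
  `M - O(1)` base-`p` digits equal to `p - 1`, so it lies in `A₋` for all large `M`.
* If `g > 1` is coprime to `q`, then `s_q (a g ^ j)` is unbounded in `j`: choosing `j` with
  `g ^ j ≡ 1` modulo a large power of `q` makes the base-`q` expansion of `a` a proper suffix of
  that of `a g ^ j`. So among the numbers `a g ^ j` with `g` a power of `p`, whose base-`p` digit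
  sum is that of `a`, arbitrarily large ones lie in `A₊`.

If some `m > 1` coprime to `p` divides `k`, pigeonhole gives suffixes `v < w < k ^ L`, both
multiples of `(k / m) ^ L`, acting identically on the states. When `m ^ L ∣ p ^ M - 1`, the number
`w p ^ M` ends in the suffix `w`, and replacing it by `v` gives `w p ^ M - (w - v)`: the former can
be put in `A₊`, the latter in `A₋`. If instead `k` is a power of `p`, take
`n = (p ^ M - 1) k ^ i ∈ A₋` and append zeros in base `k`: this keeps the base-`p` digit sum, and
the states it reaches are eventually periodic.
-/

open Filter

theorem digits_pow_mul_add {b L x w : ℕ} (hb : 1 < b) (hx : 0 < x) (hw : w < b ^ L) :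
    Nat.digits b (b ^ L * x + w) =
      Nat.digits b w ++ List.replicate (L - (Nat.digits b w).length) 0 ++ Nat.digits b x := by
  have hlen : (Nat.digits b w).length ≤ L := (Nat.digits_length_le_iff hb w).2 hw
  rw [Nat.digits_append_zeroes_append_digits hb hx, Nat.add_sub_cancel' hlen, add_comm]

theorem digSum_pow_mul_add {b L x w : ℕ} (hb : 1 < b) (hw : w < b ^ L) :
    digSum b (b ^ L * x + w) = digSum b x + digSum b w := by
  rcases x.eq_zero_or_pos with rfl | hx
  · simp [digSum]
  · rw [digSum, digits_pow_mul_add hb hx hw]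
    simp [digSum, add_comm]

theorem digSum_mul_pow {b : ℕ} (hb : 1 < b) (x L : ℕ) : digSum b (x * b ^ L) = digSum b x := by
  simpa [digSum, mul_comm] using digSum_pow_mul_add (x := x) hb (pow_pos (by lia : 0 < b) L)

theorem digSum_pos_s3 {b n : ℕ} (hn : 0 < n) : 0 < digSum b n := by
  refine Nat.pos_of_ne_zero fun h ↦ Nat.getLast_digit_ne_zero b hn.ne' ?_
  exact List.sum_eq_zero_iff.1 h _ (List.getLast_mem (Nat.digits_ne_nil_iff_ne_zero.2 hn.ne'))

theorem digSum_pow_sub_one {b : ℕ} (hb : 1 < b) (N : ℕ) :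
    digSum b (b ^ N - 1) = (b - 1) * N := by
  induction N with
  | zero => simp [digSum]
  | succ N ih =>
    have hpos : 0 < b ^ N := by positivity
    have hlead : b ^ (N + 1) - 1 = b ^ N * (b - 1) + (b ^ N - 1) := by
      rw [pow_succ, Nat.mul_sub_one]
      have : b ^ N ≤ b ^ N * b := Nat.le_mul_of_pos_right _ (by lia)
      lia
    have hdigit : digSum b (b - 1) = b - 1 := by
      simp [digSum, Nat.digits_of_lt b (b - 1) (by lia) (by lia)]
    rw [hlead, digSum_pow_mul_add hb (by lia), hdigit, ih]
    ring

theorem le_digSum_mul_pow_sub {b a d r : ℕ} (hb : 1 < b) (ha : 0 < a) (hd : 0 < d)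
    (hdr : d ≤ b ^ r) (N : ℕ) : (b - 1) * N ≤ digSum b (a * b ^ (r + N) - d) := by
  obtain ⟨a, rfl⟩ := Nat.exists_eq_add_one.2 ha
  have hpos : 0 < b ^ N := by positivity
  have hexpand : (a + 1) * b ^ (r + N) - d =
      b ^ r * (b ^ N * a + (b ^ N - 1)) + (b ^ r - d) := by
    have : (a + 1) * b ^ (r + N) = b ^ r * (b ^ N * a + (b ^ N - 1)) + b ^ r := by
      rw [pow_add, ← Nat.mul_add_one, add_assoc, Nat.sub_add_cancel hpos]
      ring
    lia
  rw [hexpand, digSum_pow_mul_add hb (by lia), digSum_pow_mul_add hb (by lia),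
    digSum_pow_sub_one hb]
  lia

theorem exists_pow_eq_mul_add_one {g m e : ℕ} (hg : 1 < g) (hgm : Nat.Coprime g m) (he : e ≠ 0)
    (hdvd : Nat.totient m ∣ e) : ∃ h, 0 < h ∧ g ^ e = m * h + 1 := by
  have hmod : 1 ≡ g ^ e [MOD m] := by
    obtain ⟨j, rfl⟩ := hdvd
    simpa [pow_mul] using ((Nat.ModEq.pow_totient hgm).pow j).symm
  have hone : 1 < g ^ e := Nat.one_lt_pow he hg
  obtain ⟨h, hh⟩ := (Nat.modEq_iff_dvd' hone.le).1 hmod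
  refine ⟨h, Nat.pos_of_ne_zero ?_, by lia⟩
  rintro rfl
  lia

theorem exists_digSum_lt_digSum_mul_pow {b g n : ℕ} (hb : 1 < b) (hg : 1 < g)
    (hgb : Nat.Coprime g b) (hn : 0 < n) : ∃ j, digSum b n < digSum b (n * g ^ j) := by
  have hφ : 0 < Nat.totient (b ^ n) := Nat.totient_pos.2 (by positivity)
  obtain ⟨h, hh, hpow⟩ := exists_pow_eq_mul_add_one hg (hgb.pow_right n) hφ.ne' dvd_rfl
  refine ⟨Nat.totient (b ^ n), ?_⟩
  have hsplit : n * g ^ Nat.totient (b ^ n) = b ^ n * (n * h) + n := by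
    rw [hpow]
    ring
  rw [hsplit, digSum_pow_mul_add hb (Nat.lt_pow_self hb)]
  exact Nat.lt_add_of_pos_left (digSum_pos_s3 (by positivity))

theorem frequently_le_digSum_mul_pow {b g a : ℕ} (hb : 1 < b) (hg : 1 < g)
    (hgb : Nat.Coprime g b) (ha : 0 < a) (B : ℕ) : ∃ᶠ j in atTop, B ≤ digSum b (a * g ^ j) := by
  rw [frequently_atTop]
  intro J
  induction B with
  | zero => exact ⟨J, le_rfl, Nat.zero_le _⟩
  | succ B ih =>
    obtain ⟨j, hJj, hj⟩ := ih
    obtain ⟨i, hi⟩ := exists_digSum_lt_digSum_mul_pow (n := a * g ^ j) hb hg hgb (by positivity)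
    refine ⟨j + i, by lia, ?_⟩
    rw [pow_add, ← mul_assoc]
    lia

theorem sub_one_mul_log_lt {x y : ℝ} (hx : 1 < x) (hxy : x < y) :
    (x - 1) * Real.log y < (y - 1) * Real.log x := by
  have hslope := strictConcaveOn_log_Ioi.secant_strict_mono (a := 1) (x := x) (y := y)
    (Set.mem_Ioi.2 one_pos) (Set.mem_Ioi.2 (by linarith)) (Set.mem_Ioi.2 (by linarith))
    hx.ne' (by linarith) hxy
  rw [Real.log_one, sub_zero, sub_zero, div_lt_div_iff₀ (by linarith) (by linarith)] at hslope
  linarith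

theorem digSum_le {b : ℕ} (hb : 1 < b) (n : ℕ) :
    digSum b n ≤ (b - 1) * (Nat.digits b n).length := by
  rw [mul_comm, ← smul_eq_mul]
  exact List.sum_le_card_nsmul _ _ fun d hd ↦ Nat.le_sub_one_of_lt (Nat.digits_lt_base hb hd)

theorem digSum_mul_log_le {b n : ℕ} (hb : 1 < b) (hn : 0 < n) :
    digSum b n * Real.log b ≤ (b - 1) * (Real.log b + Real.log n) := by
  have hb' : (1 : ℝ) < b := by exact_mod_cast hb
  have hsum : (digSum b n : ℝ) ≤ (b - 1) * (Nat.digits b n).length := by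
    have := digSum_le hb n
    rify [hb.le] at this
    exact this
  have hlen : (Nat.digits b n).length * Real.log b ≤ Real.log b + Real.log n := by
    rw [← Real.log_pow, ← Real.log_mul (by positivity) (by positivity)]
    refine Real.log_le_log (by positivity) ?_
    exact_mod_cast Nat.base_pow_length_digits_le b n hb hn.ne'
  calc digSum b n * Real.log b
      ≤ (b - 1) * (Nat.digits b n).length * Real.log b := by
        gcongr
    _ ≤ (b - 1) * (Real.log b + Real.log n) := by
        rw [mul_assoc]
        gcongr

theorem eventually_digSum_le {q p : ℕ} (hq : 1 < q) (hqp : q < p) (C : ℕ) :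
    ∀ᶠ N in atTop, ∀ n ≤ C * p ^ N, digSum q n ≤ (p - 1) * N := by
  have hq' : (1 : ℝ) < q := by exact_mod_cast hq
  have hqp' : (q : ℝ) < p := by exact_mod_cast hqp
  have hgap := sub_pos.2 (sub_one_mul_log_lt hq' hqp')
  filter_upwards [(tendsto_natCast_atTop_atTop.atTop_mul_const hgap).eventually_ge_atTop
    ((q - 1) * (Real.log q + Real.log C))] with N hN n hn
  rcases n.eq_zero_or_pos with rfl | hn0
  · simp [digSum]
  have hp : 0 < p := by lia
  have hC : C ≠ 0 := by
    rintro rfl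
    lia
  have hlog : Real.log n ≤ Real.log C + N * Real.log p := by
    rw [← Real.log_pow, ← Real.log_mul (by positivity) (by positivity)]
    refine Real.log_le_log (by positivity) ?_
    exact_mod_cast hn
  have hmul : digSum q n * Real.log q ≤ (p - 1) * N * Real.log q := by
    calc digSum q n * Real.log q ≤ (q - 1) * (Real.log q + Real.log n) := digSum_mul_log_le hq hn0
      _ ≤ (q - 1) * (Real.log q + (Real.log C + N * Real.log p)) := by
        gcongr
      _ ≤ (p - 1) * N * Real.log q := by linarith
  have hle := le_of_mul_le_mul_right hmul (Real.log_pos hq')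
  rify [(by lia : 1 ≤ p)]
  exact hle

theorem eventually_sup_digSum_eq {P : Finset ℕ} {p a d : ℕ} (hP : ∀ q ∈ P, 2 ≤ q) (hpP : p ∈ P)
    (hpmax : ∀ q ∈ P, q ≤ p) (ha : 0 < a) (hd : 0 < d) :
    ∀ᶠ M in atTop,
      P.sup (fun q => digSum q (a * p ^ M - d)) = digSum p (a * p ^ M - d) := by
  have hp : 1 < p := hP p hpP
  have hsmall : ∀ᶠ N in atTop, ∀ q ∈ P, q ≠ p →
      ∀ n ≤ a * p ^ d * p ^ N, digSum q n ≤ (p - 1) * N :=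
    (eventually_all_finset P).2 fun q hq ↦ eventually_imp_distrib_left.2 fun hqp ↦
      eventually_digSum_le (hP q hq) ((hpmax q hq).lt_of_ne hqp) _
  rw [← map_add_atTop_eq_nat d, eventually_map]
  filter_upwards [hsmall] with N hN
  refine le_antisymm (Finset.sup_le fun q hq ↦ ?_)
    (Finset.le_sup (f := fun q => digSum q (a * p ^ (N + d) - d)) hpP)
  rcases eq_or_ne q p with rfl | hqp
  · rfl
  · rw [add_comm]
    refine (hN q hq hqp _ ?_).trans
      (le_digSum_mul_pow_sub hp ha hd (Nat.lt_pow_self hp).le N)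
    rw [mul_assoc, ← pow_add]
    exact Nat.sub_le _ _

theorem exists_iterate_add_mul_eq {α : Type*} [Finite α] (f : α → α) :
    ∃ i T, 0 < T ∧ ∀ j, f^[i + T * j] = f^[i] := by
  obtain ⟨i, -, i', -, hlt, heq⟩ := Set.infinite_univ.exists_lt_map_eq_of_mapsTo
    (Set.mapsTo_univ (fun n : ℕ ↦ f^[n]) _) Set.finite_univ
  obtain ⟨T, rfl⟩ := Nat.exists_eq_add_of_lt hlt
  refine ⟨i, T + 1, T.succ_pos, fun j ↦ ?_⟩
  induction j with
  | zero => simp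
  | succ j ih =>
    rw [(by ring : i + (T + 1) * (j + 1) = i + T + 1 + (T + 1) * j), Function.iterate_add,
      ← heq, ← Function.iterate_add, ih]

section Automaton

variable {Q : Type} {k : ℕ}

theorem autoRun_base_mul (hk : 1 < k) (ρ : Q → Fin k → Q) (q₀ : Q) {x : ℕ} (hx : 0 < x) :
    autoRun k ρ q₀ (k * x) = ρ (autoRun k ρ q₀ x) ⟨0, by lia⟩ := by
  simp [autoRun, Nat.digits_base_mul hk hx, (by lia : 0 < k)]

theorem autoRun_mul_pow (hk : 1 < k) (ρ : Q → Fin k → Q) (q₀ : Q) {x : ℕ} (hx : 0 < x) (L : ℕ) :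
    autoRun k ρ q₀ (x * k ^ L) = (fun s ↦ ρ s ⟨0, by lia⟩)^[L] (autoRun k ρ q₀ x) := by
  induction L with
  | zero => simp
  | succ L ih =>
    rw [pow_succ, ← mul_assoc, mul_comm _ k, autoRun_base_mul hk ρ q₀ (by positivity), ih,
      Function.iterate_succ_apply']

theorem exists_autoRun_pow_mul_add_eq (hk : 1 < k) (ρ : Q → Fin k → Q) (q₀ : Q) (L : ℕ) :
    ∃ g : ℕ → Q → Q, ∀ x w, 0 < x → w < k ^ L →
      autoRun k ρ q₀ (k ^ L * x + w) = g w (autoRun k ρ q₀ x) :=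
  ⟨fun w s ↦ (Nat.digits k w ++ List.replicate (L - (Nat.digits k w).length) 0).reverse.foldl
      (fun q d ↦ if h : d < k then ρ q ⟨d, h⟩ else q) s,
    fun x w hx hw ↦ by
      rw [autoRun, digits_pow_mul_add hk hx hw, List.reverse_append, List.foldl_append, autoRun]⟩

variable [Finite Q]

theorem exists_lt_forall_autoRun_eq (hk : 1 < k) (ρ : Q → Fin k → Q) (q₀ : Q) {L c : ℕ}
    {f : ℕ → ℕ} (hf : ∀ a < c, f a < k ^ L) (hc : Nat.card (Q → Q) < c) :
    ∃ a b, a < b ∧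
      ∀ x, 0 < x → autoRun k ρ q₀ (k ^ L * x + f a) = autoRun k ρ q₀ (k ^ L * x + f b) := by
  obtain ⟨g, hg⟩ := exists_autoRun_pow_mul_add_eq hk ρ q₀ L
  obtain ⟨a, b, hab, hgab⟩ : ∃ a b : Fin c, a ≠ b ∧ g (f a) = g (f b) := by
    have := Fintype.ofFinite (Q → Q)
    refine Fintype.exists_ne_map_eq_of_card_lt (fun a : Fin c ↦ g (f a)) ?_
    rwa [Fintype.card_fin, ← Nat.card_eq_fintype_card]
  wlog hlt : a < b generalizing a b
  · exact this b a hab.symm hgab.symm (hab.symm.lt_of_le (not_lt.1 hlt))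
  refine ⟨a, b, hlt, fun x hx ↦ ?_⟩
  rw [hg x _ hx (hf a a.2), hg x _ hx (hf b b.2), hgab]

section Collision

variable {P : Finset ℕ} {p q : ℕ}

theorem exists_autoRun_eq_of_base_eq_pow (hP : ∀ q ∈ P, 2 ≤ q) (hpP : p ∈ P)
    (hpmax : ∀ q ∈ P, q ≤ p) (hq : 1 < q) (hpq : Nat.Coprime p q) {e : ℕ} (hk : 1 < k)
    (hkp : k = p ^ e) (ρ : Q → Fin k → Q) (q₀ : Q) (B : ℕ) :
    ∃ n n', 0 < n ∧ 0 < n' ∧ P.sup (fun q => digSum q n) = digSum p n ∧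
      digSum p n' + B ≤ digSum q n' ∧ autoRun k ρ q₀ n = autoRun k ρ q₀ n' := by
  have hp : 1 < p := hP p hpP
  obtain ⟨i, T, hT, hperiod⟩ := exists_iterate_add_mul_eq fun s ↦ ρ s ⟨0, by lia⟩
  have hki : 0 < k ^ i := by positivity
  obtain ⟨M, hsup, hM⟩ := ((eventually_sup_digSum_eq hP hpP hpmax hki hki).and
    (eventually_ge_atTop 1)).exists
  set u := p ^ M - 1
  have hu : 0 < u := Nat.sub_pos_of_lt (Nat.one_lt_pow (by lia) hp)
  have hshift (L : ℕ) : digSum p (u * k ^ L) = digSum p u := by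
    rw [hkp, ← pow_mul, digSum_mul_pow hp]
  obtain ⟨j, hj⟩ := (frequently_le_digSum_mul_pow (g := k ^ T) hq (Nat.one_lt_pow hT.ne' hk)
    (by rw [hkp]; exact (hpq.pow_left e).pow_left T) (Nat.mul_pos hu hki) (digSum p u + B)).exists
  refine ⟨u * k ^ i, u * k ^ (i + T * j), by positivity, by positivity, ?_, ?_, ?_⟩
  · rwa [mul_comm, Nat.mul_sub_one]
  · rwa [hshift, pow_add, pow_mul, ← mul_assoc]
  · rw [autoRun_mul_pow hk ρ q₀ hu, autoRun_mul_pow hk ρ q₀ hu, hperiod]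

theorem exists_autoRun_eq_of_coprime_dvd (hP : ∀ q ∈ P, 2 ≤ q) (hpP : p ∈ P)
    (hpmax : ∀ q ∈ P, q ≤ p) (hq : 1 < q) (hpq : Nat.Coprime p q) {m : ℕ} (hk : 0 < k)
    (hm : 1 < m) (hmk : m ∣ k) (hpm : Nat.Coprime p m) (ρ : Q → Fin k → Q) (q₀ : Q) (B : ℕ) :
    ∃ n n', 0 < n ∧ 0 < n' ∧ P.sup (fun q => digSum q n) = digSum p n ∧
      digSum p n' + B ≤ digSum q n' ∧ autoRun k ρ q₀ n = autoRun k ρ q₀ n' := by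
  have hp : 1 < p := hP p hpP
  obtain ⟨l, hkl⟩ := hmk
  have hl : 0 < l := Nat.pos_of_mul_pos_left (hkl ▸ hk)
  set L := Nat.card (Q → Q)
  have hkL : k ^ L = m ^ L * l ^ L := by rw [hkl, mul_pow]
  obtain ⟨a, b, hab, hrun⟩ := exists_lt_forall_autoRun_eq (f := fun a ↦ a * l ^ L)
    (hm.trans_le (Nat.le_of_dvd hk ⟨l, hkl⟩)) ρ q₀ (L := L) (c := m ^ L)
    (fun a ha ↦ hkL ▸ Nat.mul_lt_mul_of_pos_right ha (by positivity)) (Nat.lt_pow_self hm)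
  set v := a * l ^ L
  set w := b * l ^ L
  have hvw : v < w := Nat.mul_lt_mul_of_pos_right hab (by positivity)
  set t := Nat.totient (m ^ L)
  have ht : 0 < t := Nat.totient_pos.2 (by positivity)
  have hsup : ∀ᶠ j in atTop, P.sup (fun q => digSum q (w * p ^ (t * j) - (w - v))) =
      digSum p (w * p ^ (t * j) - (w - v)) :=
    (tendsto_id.const_mul_atTop' ht).eventually
      (eventually_sup_digSum_eq hP hpP hpmax (by lia) (by lia))
  obtain ⟨j, hlarge, hsupj, hj⟩ := ((frequently_le_digSum_mul_pow (g := p ^ t) (a := w) hq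
    (Nat.one_lt_pow ht.ne' hp) (hpq.pow_left t) (by lia) (digSum p w + B)).and_eventually
    (hsup.and (eventually_gt_atTop 0))).exists
  obtain ⟨h, hh, hpow⟩ := exists_pow_eq_mul_add_one hp (hpm.pow_right L)
    (Nat.mul_pos ht hj).ne' (dvd_mul_right t j)
  have hsuffix : w * p ^ (t * j) = k ^ L * (b * h) + w := by
    rw [hpow, hkL]
    ring
  have hx : 0 < b * h := Nat.mul_pos (by lia) hh
  refine ⟨k ^ L * (b * h) + v, k ^ L * (b * h) + w, by positivity, by positivity, ?_, ?_,
    hrun _ hx⟩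
  · rwa [hsuffix, (by lia : k ^ L * (b * h) + w - (w - v) = k ^ L * (b * h) + v)] at hsupj
  · rwa [← hsuffix, digSum_mul_pow hp, pow_mul]

end Collision

theorem no_automaton_separates_digit_sum_sets_general {P : Finset ℕ} (hP : ∀ q ∈ P, 2 ≤ q)
    (hcard : 2 ≤ P.card) {p : ℕ} (hp : p.Prime) (hpP : p ∈ P) (hpmax : ∀ q ∈ P, q ≤ p) (c : ℝ)
    (hk : 2 ≤ k) (ρ : Q → Fin k → Q) (q₀ : Q) {Δ : Type*} {τ : Q → Δ} {δminus δplus : Δ}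
    (hminus : ∀ n : ℕ, 0 < n → P.sup (fun q => digSum q n) = digSum p n →
      τ (autoRun k ρ q₀ n) = δminus)
    (hplus : ∀ n : ℕ, 0 < n →
      c ≤ ((P.sup (fun q => digSum q n) : ℕ) : ℝ) - (digSum p n : ℝ) →
      τ (autoRun k ρ q₀ n) = δplus) :
    δminus = δplus := by
  obtain ⟨q, hqP, hqp⟩ := Finset.exists_mem_ne hcard p
  have hq : 2 ≤ q := hP q hqP
  have hpq : Nat.Coprime p q :=
    Nat.coprime_of_lt_prime (by lia) ((hpmax q hqP).lt_of_ne hqp) hp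
  obtain ⟨n, n', hn, hn', hsup, hgap, hrun⟩ : ∃ n n', 0 < n ∧ 0 < n' ∧
      P.sup (fun q => digSum q n) = digSum p n ∧ digSum p n' + ⌈c⌉₊ ≤ digSum q n' ∧
      autoRun k ρ q₀ n = autoRun k ρ q₀ n' := by
    by_cases hother : ∃ r, r.Prime ∧ r ∣ k ∧ r ≠ p
    · obtain ⟨r, hr, hrk, hrp⟩ := hother
      exact exists_autoRun_eq_of_coprime_dvd hP hpP hpmax hq hpq (by lia) hr.one_lt hrk
        ((Nat.coprime_primes hp hr).2 hrp.symm) ρ q₀ _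
    · push Not at hother
      exact exists_autoRun_eq_of_base_eq_pow hP hpP hpmax hq hpq hk
        (Nat.eq_prime_pow_of_unique_prime_dvd (by lia) (hother _)) ρ q₀ _
  have hle : digSum q n' ≤ P.sup fun q => digSum q n' :=
    Finset.le_sup (f := fun q => digSum q n') hqP
  have hge : c ≤ ((P.sup (fun q => digSum q n') : ℕ) : ℝ) - digSum p n' :=
    (Nat.le_ceil c).trans (le_sub_iff_add_le'.2 (by exact_mod_cast hgap.trans hle))
  rw [← hminus n hn hsup, hrun, hplus n' hn' hge]

end Automaton

/-- Let `P` be a finite set of primes with at least two elements, `p` its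
largest element, and `c > 0` a real number.  No finite automaton with output
can assign one fixed output value to all `n` with `max_{q ∈ P} s_q n = s_p n`
and a different fixed output value to all `n` with
`max_{q ∈ P} s_q n - s_p n ≥ c`. -/
theorem no_automaton_separates_digit_sum_sets (P : Finset ℕ)
    (hprime : ∀ q ∈ P, Nat.Prime q) (hcard : 2 ≤ P.card)
    (p : ℕ) (hpP : p ∈ P) (hpmax : ∀ q ∈ P, q ≤ p)
    (c : ℝ) (hc : 0 < c) (k : ℕ) (hk : 2 ≤ k) :
    ¬ ∃ (Q : Type) (_ : Finite Q) (ρ : Q → Fin k → Q) (q₀ : Q)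
        (Δ : Type) (_ : Finite Δ) (τ : Q → Δ) (δminus δplus : Δ),
      δminus ≠ δplus ∧
      (∀ n : ℕ, 0 < n → P.sup (fun q => digSum q n) = digSum p n →
        τ (autoRun k ρ q₀ n) = δminus) ∧
      (∀ n : ℕ, 0 < n →
        c ≤ ((P.sup (fun q => digSum q n) : ℕ) : ℝ) - (digSum p n : ℝ) →
        τ (autoRun k ρ q₀ n) = δplus) := by
  rintro ⟨Q, _, ρ, q₀, Δ, _, τ, δminus, δplus, hne, hminus, hplus⟩
  exact hne (no_automaton_separates_digit_sum_sets_general (fun q hq ↦ (hprime q hq).two_le) hcard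
    (hprime p hpP) hpP hpmax c hk ρ q₀ hminus hplus)
end
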